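/- Suppose each A_k has full row rank with λ_min(A_k A_k^T) ≥ γ_k² for constants γ_k > 0, and let γ_min := min_k γ_k. Then for every r ≥ 0 the cyclic exact BCD iterates satisfy Δ^{(r+1)} ≤ 3 · max{ Δ^{(0)}, 2 R_0² · (1/γ_min²) · log²(2NK) · (L² + L_max²) } / (r+1), where Δ^{(r)} := f(x^{(r)}) − f*. -/

import Mathlib

open Finset

/-- Squared Euclidean norm of a vector in `ℝ^n`. -/
noncomputable def sqnorm {n : ℕ} (v : Fin n → ℝ) : ℝ := ∑ i, v i ^ 2

/-- Euclidean inner product on `ℝ^n`. -/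
noncomputable def dotp {n : ℕ} (u v : Fin n → ℝ) : ℝ := ∑ i, u i * v i

/-- `λ_max(AᵀA)` for a real matrix `A`, characterized as the maximum of `‖Av‖²`
over unit vectors `v`. -/
noncomputable def lamMaxQ {M N : ℕ} (A : Matrix (Fin M) (Fin N) ℝ) : ℝ :=
  sSup {r : ℝ | ∃ v : Fin N → ℝ, sqnorm v = 1 ∧ r = sqnorm (A.mulVec v)}

/-- `λ_min(AᵀA)` for a real matrix `A`, characterized as the minimum of `‖Av‖²`
over unit vectors `v`. -/
noncomputable def lamMinQ {M N : ℕ} (A : Matrix (Fin M) (Fin N) ℝ) : ℝ :=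
  sInf {r : ℝ | ∃ v : Fin N → ℝ, sqnorm v = 1 ∧ r = sqnorm (A.mulVec v)}

/-- `λ_max(AᵀA)` for the concatenated matrix `A = [A_1 ⋯ A_K]`, acting on block
vectors. -/
noncomputable def lamMaxBlock {K M N : ℕ} (A : Fin K → Matrix (Fin M) (Fin N) ℝ) : ℝ :=
  sSup {r : ℝ | ∃ v : Fin K → Fin N → ℝ, (∑ k, sqnorm (v k)) = 1 ∧
    r = sqnorm (∑ k, (A k).mulVec (v k))}

/-- Maximum of a finite family of reals indexed by `Fin K`, `K ≥ 1`. -/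
noncomputable def maxOf {K : ℕ} (hK : 1 ≤ K) (P : Fin K → ℝ) : ℝ :=
  Finset.univ.sup' (Finset.univ_nonempty_iff.mpr ⟨⟨0, hK⟩⟩) P

/-- Minimum of a finite family of reals indexed by `Fin K`, `K ≥ 1`. -/
noncomputable def minOf {K : ℕ} (hK : 1 ≤ K) (P : Fin K → ℝ) : ℝ :=
  Finset.univ.inf' (Finset.univ_nonempty_iff.mpr ⟨⟨0, hK⟩⟩) P

/-- The residual `Σ_k A_k x_k − b`. -/
noncomputable def resid {K M N : ℕ} (A : Fin K → Matrix (Fin M) (Fin N) ℝ)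
    (b : Fin M → ℝ) (x : Fin K → Fin N → ℝ) : Fin M → ℝ :=
  (∑ k, (A k).mulVec (x k)) - b

/-- The smooth part `g(x) = (1/2)‖Σ_k A_k x_k − b‖²`. -/
noncomputable def gq {K M N : ℕ} (A : Fin K → Matrix (Fin M) (Fin N) ℝ)
    (b : Fin M → ℝ) (x : Fin K → Fin N → ℝ) : ℝ :=
  (1 / 2) * sqnorm (resid A b x)

/-- The objective `f(x) = g(x) + Σ_k h_k(x_k)`. -/
noncomputable def fq {K M N : ℕ} (A : Fin K → Matrix (Fin M) (Fin N) ℝ)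
    (b : Fin M → ℝ) (h : Fin K → (Fin N → ℝ) → ℝ) (x : Fin K → Fin N → ℝ) : ℝ :=
  gq A b x + ∑ k, h k (x k)

/-- The partial gradient `∇_k g(x) = A_kᵀ (Σ_j A_j x_j − b)`. -/
noncomputable def gradk {K M N : ℕ} (A : Fin K → Matrix (Fin M) (Fin N) ℝ)
    (b : Fin M → ℝ) (x : Fin K → Fin N → ℝ) (k : Fin K) : Fin N → ℝ :=
  ((A k).transpose).mulVec (resid A b x)

/-- The intermediate point `w_k^{(r+1)}` of the cycle: blocks `j < k` come from
`x^{(r+1)} = xp`, the remaining blocks from `x^{(r)} = x`. -/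
def wpt {K N : ℕ} (x xp : Fin K → Fin N → ℝ) (k : Fin K) : Fin K → Fin N → ℝ :=
  fun j => if j < k then xp j else x j

/-- The objective of the `k`-th BCPG prox subproblem at the point
`w_k^{(r+1)} = wpt x xp k`, evaluated at candidate block `y`. -/
noncomputable def bcpgObj {K M N : ℕ} (A : Fin K → Matrix (Fin M) (Fin N) ℝ)
    (b : Fin M → ℝ) (h : Fin K → (Fin N → ℝ) → ℝ) (P : Fin K → ℝ)
    (x xp : Fin K → Fin N → ℝ) (k : Fin K) (y : Fin N → ℝ) : ℝ :=
  dotp (gradk A b (wpt x xp k) k) (y - x k) + (P k / 2) * sqnorm (y - x k) + h k y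

/-- One cycle of cyclic BCPG: `xp = x^{(r+1)}` is obtained from `x = x^{(r)}`
by letting, for `k = 1,…,K`, the `k`-th block minimize the prox subproblem at
`w_k^{(r+1)}` over `X_k`. -/
def BCPGStep {K M N : ℕ} (A : Fin K → Matrix (Fin M) (Fin N) ℝ)
    (b : Fin M → ℝ) (h : Fin K → (Fin N → ℝ) → ℝ)
    (X : Fin K → Set (Fin N → ℝ)) (P : Fin K → ℝ)
    (x xp : Fin K → Fin N → ℝ) : Prop :=
  ∀ k : Fin K, xp k ∈ X k ∧ ∀ y ∈ X k,
    bcpgObj A b h P x xp k (xp k) ≤ bcpgObj A b h P x xp k y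

/-- One cycle of cyclic exact BCD: `xp = x^{(r+1)}` is obtained from
`x = x^{(r)}` by letting, for `k = 1,…,K`, the `k`-th block minimize
`f(x_1^{(r+1)},…,x_{k−1}^{(r+1)}, ·, x_{k+1}^{(r)},…,x_K^{(r)})` over `X_k`. -/
def BCDStep {K M N : ℕ} (A : Fin K → Matrix (Fin M) (Fin N) ℝ)
    (b : Fin M → ℝ) (h : Fin K → (Fin N → ℝ) → ℝ)
    (X : Fin K → Set (Fin N → ℝ))
    (x xp : Fin K → Fin N → ℝ) : Prop :=
  ∀ k : Fin K, xp k ∈ X k ∧ ∀ y ∈ X k,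
    fq A b h (Function.update (wpt x xp k) k (xp k)) ≤
      fq A b h (Function.update (wpt x xp k) k y)

lemma aux_sq_nonneg {n : ℕ} (v : Fin n → ℝ) : 0 ≤ sqnorm v :=
  Finset.sum_nonneg fun i _ => sq_nonneg _

lemma aux_sq_add {n : ℕ} (a c : Fin n → ℝ) :
    sqnorm (a + c) = sqnorm a + 2 * dotp a c + sqnorm c := by
  simp only [sqnorm, dotp, Finset.mul_sum, ← Finset.sum_add_distrib, Pi.add_apply]
  exact Finset.sum_congr rfl fun i _ => by ring

lemma aux_sq_smul {n : ℕ} (t : ℝ) (a : Fin n → ℝ) : sqnorm (t • a) = t ^ 2 * sqnorm a := by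
  simp only [sqnorm, Finset.mul_sum, Pi.smul_apply, smul_eq_mul]
  exact Finset.sum_congr rfl fun i _ => by ring

lemma aux_dot_smul {n : ℕ} (t : ℝ) (a c : Fin n → ℝ) : dotp a (t • c) = t * dotp a c := by
  simp only [dotp, Finset.mul_sum, Pi.smul_apply, smul_eq_mul]
  exact Finset.sum_congr rfl fun i _ => by ring

lemma aux_dot_eq {n : ℕ} (a c : Fin n → ℝ) : dotp a c = a ⬝ᵥ c := rfl

lemma aux_sq_eq {n : ℕ} (a : Fin n → ℝ) : sqnorm a = a ⬝ᵥ a := by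
  simp [sqnorm, dotProduct, sq]

lemma aux_cs {n : ℕ} (a c : Fin n → ℝ) : dotp a c ^ 2 ≤ sqnorm a * sqnorm c :=
  Finset.sum_mul_sq_le_sq_mul_sq _ _ _

/-- Cauchy-Schwarz for families of vectors. -/
lemma aux_cs_fam {ι : Type*} [Fintype ι] {n : ℕ} (a c : ι → Fin n → ℝ) :
    (∑ j, dotp (a j) (c j)) ^ 2 ≤ (∑ j, sqnorm (a j)) * ∑ j, sqnorm (c j) := by
  have := Finset.sum_mul_sq_le_sq_mul_sq (Finset.univ : Finset (ι × Fin n))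
    (fun p => a p.1 p.2) (fun p => c p.1 p.2)
  simpa only [Fintype.sum_prod_type, dotp, sqnorm] using this

lemma aux_block_crude {K M N : ℕ} (A : Fin K → Matrix (Fin M) (Fin N) ℝ)
    (v : Fin K → Fin N → ℝ) :
    sqnorm (∑ k, (A k).mulVec (v k)) ≤
      (∑ i, ∑ k, sqnorm (A k i)) * ∑ k, sqnorm (v k) := by
  rw [Finset.sum_mul]
  unfold sqnorm
  refine Finset.sum_le_sum fun i _ => ?_
  have := aux_cs_fam (fun k => A k i) v
  simpa only [Finset.sum_apply, Matrix.mulVec, dotProduct, dotp, sqnorm] using this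

lemma aux_block {K M N : ℕ} (A : Fin K → Matrix (Fin M) (Fin N) ℝ)
    (v : Fin K → Fin N → ℝ) :
    sqnorm (∑ k, (A k).mulVec (v k)) ≤ lamMaxBlock A * ∑ k, sqnorm (v k) := by
  set S := ∑ k, sqnorm (v k) with hS
  have hS0 : 0 ≤ S := Finset.sum_nonneg fun k _ => aux_sq_nonneg _
  rcases hS0.eq_or_lt with h0 | hpos
  · have := aux_block_crude A v
    rw [← hS, ← h0, mul_zero] at this
    rw [← h0, mul_zero]; exact this
  · have hb : BddAbove {r : ℝ | ∃ v : Fin K → Fin N → ℝ, (∑ k, sqnorm (v k)) = 1 ∧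
        r = sqnorm (∑ k, (A k).mulVec (v k))} := by
      refine ⟨∑ i, ∑ k, sqnorm (A k i), ?_⟩
      rintro r ⟨v, hv, rfl⟩
      simpa [hv] using aux_block_crude A v
    have hs2 : (Real.sqrt S)⁻¹ ^ 2 = S⁻¹ := by rw [inv_pow, Real.sq_sqrt hS0]
    have := le_csSup hb ⟨fun k => (Real.sqrt S)⁻¹ • v k, by
      simp only [aux_sq_smul, ← Finset.mul_sum, hs2]
      rw [← hS]; exact inv_mul_cancel₀ hpos.ne', rfl⟩
    simp only [Matrix.mulVec_smul, ← Finset.smul_sum, aux_sq_smul, hs2] at this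
    rw [inv_mul_le_iff₀ hpos] at this
    rw [mul_comm]; exact this

lemma aux_min {M N : ℕ} (B : Matrix (Fin M) (Fin N) ℝ) (v : Fin N → ℝ) (hv : sqnorm v = 1) :
    lamMinQ B ≤ sqnorm (B.mulVec v) := by
  refine csInf_le ⟨0, ?_⟩ ⟨v, hv, rfl⟩
  rintro r ⟨v, _, rfl⟩
  exact aux_sq_nonneg _

lemma aux_dot_mulVec {M N : ℕ} (B : Matrix (Fin M) (Fin N) ℝ) (v : Fin M → ℝ) :
    dotp v (B.mulVec (B.transpose.mulVec v)) = sqnorm (B.transpose.mulVec v) := by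
  rw [aux_dot_eq, aux_sq_eq, Matrix.dotProduct_mulVec, Matrix.mulVec_transpose]

lemma aux_dot_sum {ι : Type*} {n : ℕ} (s : Finset ι) (a : Fin n → ℝ) (c : ι → Fin n → ℝ) :
    dotp a (∑ j ∈ s, c j) = ∑ j ∈ s, dotp a (c j) := by
  simp only [aux_dot_eq, dotProduct_sum]

lemma aux_sum_dot {ι : Type*} {n : ℕ} (s : Finset ι) (a : Fin n → ℝ) (c : ι → Fin n → ℝ) :
    dotp (∑ j ∈ s, c j) a = ∑ j ∈ s, dotp (c j) a := by
  simp only [aux_dot_eq, sum_dotProduct]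

lemma aux_L {K M N : ℕ} (hM : 1 ≤ M) (A : Fin K → Matrix (Fin M) (Fin N) ℝ) (g : ℝ)
    (hg : 0 < g) (hK : 1 ≤ K) (hr : ∀ k, g ≤ lamMinQ ((A k).transpose)) :
    K * g ≤ lamMaxBlock A := by
  let v : Fin M → ℝ := Pi.single ⟨0, hM⟩ 1
  have hv : sqnorm v = 1 := by rw [aux_sq_eq]; simp [v]
  set Q := ∑ k, sqnorm ((A k).transpose.mulVec v) with hQ
  have h1 : K * g ≤ Q := by
    have : ∑ k : Fin K, g ≤ Q :=
      Finset.sum_le_sum fun k _ => (hr k).trans (aux_min _ v hv)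
    simpa using this
  have hKr : (1 : ℝ) ≤ K := by exact_mod_cast hK
  have hQpos : 0 < Q := lt_of_lt_of_le (by positivity) h1
  have h2 : dotp v (∑ k, (A k).mulVec ((A k).transpose.mulVec v)) = Q := by
    rw [aux_dot_sum]
    exact Finset.sum_congr rfl fun k _ => aux_dot_mulVec _ _
  have h3 := aux_cs v (∑ k, (A k).mulVec ((A k).transpose.mulVec v))
  have h4 := aux_block A (fun k => (A k).transpose.mulVec v)
  rw [h2, hv, one_mul] at h3
  have h5 : Q * Q ≤ lamMaxBlock A * Q := by nlinarith
  exact h1.trans (le_of_mul_le_mul_right h5 hQpos)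

/-- first-order quadratic argument -/
lemma aux_small (a c : ℝ) (hc : 0 ≤ c) (H : ∀ t : ℝ, 0 < t → t ≤ 1 → 0 ≤ t * a + t ^ 2 * c) :
    0 ≤ a := by
  by_contra hneg
  push Not at hneg
  have hd : 0 < c + -a := by linarith
  have ht : 0 < -a / (2 * (c + -a)) := by apply div_pos <;> linarith
  have ht1 : -a / (2 * (c + -a)) ≤ 1 := by rw [div_le_one (by linarith)]; linarith
  have h1 := H _ ht ht1
  have h2 : (-a / (2 * (c + -a))) * (c + -a) = -a / 2 := by field_simp
  set t := -a / (2 * (c + -a))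
  have h3 : 0 ≤ t * (a + t * c) := by nlinarith
  have h4 : 0 ≤ a + t * c := nonneg_of_mul_nonneg_right h3 ht
  nlinarith

section step
variable {K M N : ℕ} (A : Fin K → Matrix (Fin M) (Fin N) ℝ) (b : Fin M → ℝ)
  (x xp : Fin K → Fin N → ℝ)

/-- block change -/
noncomputable def auxU (k : Fin K) : Fin M → ℝ := (A k).mulVec (xp k - x k)

/-- residual after the first `n` updates -/
noncomputable def auxE (n : ℕ) : Fin M → ℝ :=
  resid A b x + ∑ j : Fin K, if j.val < n then auxU A x xp j else 0

lemma auxE_zero : auxE A b x xp 0 = resid A b x := by simp [auxE]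

lemma auxE_last : auxE A b x xp K = resid A b xp := by
  simp only [auxE, auxU, resid, Fin.is_lt, if_true, Matrix.mulVec_sub, Finset.sum_sub_distrib]
  abel

lemma auxE_succ (k : Fin K) :
    auxE A b x xp (k.val + 1) = auxE A b x xp k.val + auxU A x xp k := by
  have : auxU A x xp k = ∑ j : Fin K, if j = k then auxU A x xp j else 0 := by simp
  unfold auxE
  rw [this, add_assoc, ← Finset.sum_add_distrib]
  congr 1
  refine Finset.sum_congr rfl fun j _ => ?_
  rcases lt_trichotomy j k with h | h | h
  · have h' : j.val < k.val := h
    simp [h.ne, h', h'.trans (Nat.lt_succ_self _)]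
  · subst h; simp
  · have h' : k.val < j.val := h
    simp [h.ne', not_lt.2 h'.le, not_le.2 h]

lemma aux_resid_update (k : Fin K) (y : Fin N → ℝ) :
    resid A b (Function.update (wpt x xp k) k y) =
      auxE A b x xp (k.val + 1) + (A k).mulVec (y - xp k) := by
  have : (A k).mulVec (y - xp k)
      = ∑ j : Fin K, if j = k then (A k).mulVec (y - xp k) else 0 := by simp
  unfold auxE resid
  rw [this, add_assoc, ← Finset.sum_add_distrib, sub_add_eq_add_sub, ← Finset.sum_add_distrib]
  congr 1
  refine Finset.sum_congr rfl fun j _ => ?_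
  rcases lt_trichotomy j k with h | h | h
  · have h' : j.val < k.val := h
    simp [h.ne, h'.trans (Nat.lt_succ_self _), wpt, h, auxU, Matrix.mulVec_sub]
  · subst h; simp [auxU, Matrix.mulVec_sub]
  · have h' : k.val < j.val := h
    simp [h.ne', wpt, not_le.2 h, not_lt.2 h.le]

variable (h : Fin K → (Fin N → ℝ) → ℝ) (X : Fin K → Set (Fin N → ℝ))

lemma aux_fq_update (k : Fin K) (y : Fin N → ℝ) :
    fq A b h (Function.update (wpt x xp k) k y) =
      (1 / 2) * sqnorm (auxE A b x xp (k.val + 1) + (A k).mulVec (y - xp k)) + h k y +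
        ∑ j ∈ Finset.univ.erase k, h j (wpt x xp k j) := by
  unfold fq gq
  rw [aux_resid_update, ← Finset.add_sum_erase _ _ (Finset.mem_univ k), Function.update_self,
    ← add_assoc]
  congr 1
  refine Finset.sum_congr rfl fun j hj => ?_
  rw [Function.update_of_ne (Finset.ne_of_mem_erase hj)]

lemma aux_opt (hXcv : ∀ k, Convex ℝ (X k)) (hhcv : ∀ k, ConvexOn ℝ Set.univ (h k))
    (hs : BCDStep A b h X x xp) (k : Fin K) (y : Fin N → ℝ) (hy : y ∈ X k) :
    h k (xp k) - h k y ≤ dotp (auxE A b x xp (k.val + 1)) ((A k).mulVec (y - xp k)) := by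
  set E := auxE A b x xp (k.val + 1) with hE
  set d := (A k).mulVec (y - xp k) with hd
  suffices 0 ≤ dotp E d + h k y - h k (xp k) by linarith
  refine aux_small _ ((1 / 2) * sqnorm d) (by have := aux_sq_nonneg d; positivity) ?_
  intro t ht ht1
  have hmem : (1 - t) • xp k + t • y ∈ X k :=
    hXcv k (hs k).1 hy (by linarith) ht.le (by ring)
  have h1 := (hs k).2 _ hmem
  have h2 := (hhcv k).2 (Set.mem_univ (xp k)) (Set.mem_univ y)
    (show 0 ≤ 1 - t by linarith) ht.le (by ring)
  rw [aux_fq_update, aux_fq_update] at h1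
  have h3 : (1 - t) • xp k + t • y - xp k = t • (y - xp k) := by
    rw [sub_smul, smul_sub, one_smul]; abel
  rw [h3, Matrix.mulVec_smul, ← hd, ← hE, sub_self, Matrix.mulVec_zero, add_zero, aux_sq_add,
    aux_sq_smul, aux_dot_smul] at h1
  simp only [smul_eq_mul] at h2
  nlinarith

lemma aux_descent (hXcv : ∀ k, Convex ℝ (X k)) (hhcv : ∀ k, ConvexOn ℝ Set.univ (h k))
    (hs : BCDStep A b h X x xp) (hx : ∀ k, x k ∈ X k) :
    (1 / 2) * ∑ k, sqnorm (auxU A x xp k) ≤ fq A b h x - fq A b h xp := by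
  have hk : ∀ k : Fin K, (1 / 2) * sqnorm (auxU A x xp k) ≤
      ((1 / 2) * sqnorm (auxE A b x xp k.val) - (1 / 2) * sqnorm (auxE A b x xp (k.val + 1)))
        + (h k (x k) - h k (xp k)) := by
    intro k
    have h1 := aux_opt A b x xp h X hXcv hhcv hs k (x k) (hx k)
    have h2 : (A k).mulVec (x k - xp k) = (-1 : ℝ) • auxU A x xp k := by
      rw [auxU, ← Matrix.mulVec_smul]; congr 1; simp
    have h3 : auxE A b x xp k.val = auxE A b x xp (k.val + 1) + (-1 : ℝ) • auxU A x xp k := by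
      rw [auxE_succ]; simp
    rw [h2, aux_dot_smul] at h1
    rw [h3, aux_sq_add, aux_dot_smul, aux_sq_smul]
    nlinarith
  have := Finset.sum_le_sum fun k (_ : k ∈ Finset.univ) => hk k
  rw [← Finset.mul_sum, Finset.sum_add_distrib, Finset.sum_sub_distrib,
    Fin.sum_univ_eq_sum_range (fun n => (1 / 2) * sqnorm (auxE A b x xp n)),
    Fin.sum_univ_eq_sum_range (fun n => (1 / 2) * sqnorm (auxE A b x xp (n + 1))),
    ← Finset.sum_sub_distrib, Finset.sum_range_sub', auxE_zero, auxE_last,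
    Finset.sum_sub_distrib] at this
  unfold fq gq
  linarith

lemma aux_upper (hXcv : ∀ k, Convex ℝ (X k)) (hhcv : ∀ k, ConvexOn ℝ Set.univ (h k))
    (hs : BCDStep A b h X x xp) (xs : Fin K → Fin N → ℝ) (hxs : ∀ k, xs k ∈ X k) :
    fq A b h xp - fq A b h xs ≤ ∑ j, dotp (auxU A x xp j)
      (∑ k, (A k).mulVec (if k < j then xp k - xs k else 0)) := by
  have h1 : ∑ k, (h k (xp k) - h k (xs k)) ≤
      ∑ k : Fin K, dotp (auxE A b x xp (k.val + 1)) ((A k).mulVec (xs k - xp k)) :=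
    Finset.sum_le_sum fun k _ => aux_opt A b x xp h X hXcv hhcv hs k (xs k) (hxs k)
  have h2 : resid A b xs = resid A b xp + ∑ k, (A k).mulVec (xs k - xp k) := by
    simp only [resid, Matrix.mulVec_sub, Finset.sum_sub_distrib]; abel
  have h3 := aux_sq_add (resid A b xp) (∑ k, (A k).mulVec (xs k - xp k))
  rw [← h2, aux_dot_sum] at h3
  have h4 := aux_sq_nonneg (∑ k, (A k).mulVec (xs k - xp k))
  have h5 : ∀ k : Fin K, resid A b xp = auxE A b x xp (k.val + 1) +
      ∑ j, if k < j then auxU A x xp j else 0 := by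
    intro k
    rw [← auxE_last A b x, auxE, auxE, add_assoc, ← Finset.sum_add_distrib]
    congr 1
    refine Finset.sum_congr rfl fun j _ => ?_
    by_cases hjk : k < j
    · have h' : k.val < j.val := hjk
      simp [hjk, Nat.lt_succ_iff, h']
    · have h' : j.val ≤ k.val := not_lt.1 hjk
      simp [hjk, Nat.lt_succ_iff, h']
  have h6 : ∑ j, dotp (auxU A x xp j)
      (∑ k, (A k).mulVec (if k < j then xp k - xs k else 0)) =
      ∑ k : Fin K, (dotp (auxE A b x xp (k.val + 1)) ((A k).mulVec (xs k - xp k)) -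
        dotp (resid A b xp) ((A k).mulVec (xs k - xp k))) := by
    simp only [aux_dot_sum]
    rw [Finset.sum_comm]
    refine Finset.sum_congr rfl fun k _ => ?_
    have h7 : dotp (resid A b xp) ((A k).mulVec (xs k - xp k)) =
        dotp (auxE A b x xp (k.val + 1)) ((A k).mulVec (xs k - xp k)) +
        ∑ j, dotp (if k < j then auxU A x xp j else 0) ((A k).mulVec (xs k - xp k)) := by
      rw [← aux_sum_dot]
      conv_lhs => rw [h5 k]
      simp only [aux_dot_eq, add_dotProduct]
    rw [h7, sub_add_cancel_left, ← Finset.sum_neg_distrib]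
    refine Finset.sum_congr rfl fun j _ => ?_
    by_cases hjk : k < j
    · simp [hjk, aux_dot_eq, Matrix.mulVec_sub, dotProduct_sub]
    · simp [hjk, aux_dot_eq]
  rw [h6, Finset.sum_sub_distrib]
  rw [Finset.sum_sub_distrib] at h1
  unfold fq gq
  linarith

lemma aux_rec (hXcv : ∀ k, Convex ℝ (X k)) (hhcv : ∀ k, ConvexOn ℝ Set.univ (h k))
    (hs : BCDStep A b h X x xp) (hx : ∀ k, x k ∈ X k)
    (xs : Fin K → Fin N → ℝ) (hxs : ∀ k, xs k ∈ X k)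
    (hpos : 0 ≤ fq A b h xp - fq A b h xs) (hL : 0 ≤ lamMaxBlock A)
    (D : ℝ) (hD : ∑ k, sqnorm (xp k - xs k) ≤ D) :
    (fq A b h xp - fq A b h xs) ^ 2 ≤
      2 * (K * (lamMaxBlock A * D)) * (fq A b h x - fq A b h xp) := by
  have h1 := aux_upper A b x xp h X hXcv hhcv hs xs hxs
  have h2 := aux_descent A b x xp h X hXcv hhcv hs hx
  have h3 := aux_cs_fam (auxU A x xp)
    (fun j => ∑ k, (A k).mulVec (if k < j then xp k - xs k else 0))
  have h4 : ∑ j : Fin K, sqnorm (∑ k, (A k).mulVec (if k < j then xp k - xs k else 0)) ≤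
      K * (lamMaxBlock A * D) := by
    have : ∀ j : Fin K, sqnorm (∑ k, (A k).mulVec (if k < j then xp k - xs k else 0)) ≤
        lamMaxBlock A * D := by
      intro j
      refine (aux_block A _).trans (mul_le_mul_of_nonneg_left (le_trans ?_ hD) hL)
      refine Finset.sum_le_sum fun k _ => ?_
      split_ifs
      · exact le_rfl
      · simpa [sqnorm] using aux_sq_nonneg (xp k - xs k)
    have := Finset.sum_le_sum fun j (_ : j ∈ Finset.univ) => this j
    simpa using this
  have hu : 0 ≤ ∑ k, sqnorm (auxU A x xp k) := Finset.sum_nonneg fun k _ => aux_sq_nonneg _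
  have hD0 : 0 ≤ D := le_trans (Finset.sum_nonneg fun k _ => aux_sq_nonneg _) hD
  have hC : 0 ≤ K * (lamMaxBlock A * D) := by positivity
  calc _ ≤ _ := pow_le_pow_left₀ hpos h1 2
    _ ≤ _ := h3
    _ ≤ (∑ k, sqnorm (auxU A x xp k)) * (K * (lamMaxBlock A * D)) :=
        mul_le_mul_of_nonneg_left h4 hu
    _ ≤ (2 * (fq A b h x - fq A b h xp)) * (K * (lamMaxBlock A * D)) :=
        mul_le_mul_of_nonneg_right (by linarith) hC
    _ = _ := by ring
end step

lemma aux_seq (d : ℕ → ℝ) (m : ℝ) (hd : ∀ r, 0 ≤ d r) (hmono : ∀ r, d (r + 1) ≤ d r)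
    (h0 : d 0 ≤ m) (hrec : ∀ r, d (r + 1) ^ 2 ≤ m * (d r - d (r + 1))) (r : ℕ) :
    d (r + 1) ≤ 3 * m / (r + 1) := by
  have hm : 0 ≤ m := (hd 0).trans h0
  induction r with
  | zero => have := hmono 0; simp; linarith
  | succ n ih =>
    have hr := hrec (n + 1)
    set t := d (n + 1 + 1)
    have ht : 0 ≤ t := hd _
    push_cast
    set q : ℝ := (n : ℝ) + 1 with hq
    have hq1 : 1 ≤ q := by rw [hq]; have : (0:ℝ) ≤ n := Nat.cast_nonneg n; linarith
    rw [le_div_iff₀ (by linarith)] at ih ⊢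
    by_contra hc
    push Not at hc
    have h1 : t ^ 2 * q ≤ m * (3 * m - t * q) := by nlinarith
    have h2 : 3 * m * t ≤ t * (q + 1) * t := by nlinarith
    have htp : 0 < t := by
      rcases ht.eq_or_lt with h | h
      · rw [← h] at hc; linarith
      · exact h
    -- multiply out
    have h3 : m * (3 * m) ≤ m * (t * (q + 1)) := mul_le_mul_of_nonneg_left hc.le hm
    have h4 : t ^ 2 * q ≤ m * t := by nlinarith
    have h5 : t * q ≤ m := by
      have : t * (t * q) ≤ t * m := by nlinarith
      exact le_of_mul_le_mul_left this htp
    nlinarith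

/-- Theorem 2, case 2: iteration complexity of cyclic exact BCD
when each `A_k` has full row rank with `λ_min(A_k A_kᵀ) ≥ γ_k²`. -/
theorem bcd_rate_row_rank {K M N : ℕ} (hK : 1 ≤ K) (hM : 1 ≤ M) (hN : 1 ≤ N)
    (hNK : 3 ≤ N * K)
    (A : Fin K → Matrix (Fin M) (Fin N) ℝ) (b : Fin M → ℝ)
    (γ : Fin K → ℝ) (hγ : ∀ k, 0 < γ k)
    (hrank : ∀ k, γ k ^ 2 ≤ lamMinQ ((A k).transpose))
    (X : Fin K → Set (Fin N → ℝ)) (h : Fin K → (Fin N → ℝ) → ℝ)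
    (hXne : ∀ k, (X k).Nonempty) (hXcl : ∀ k, IsClosed (X k))
    (hXcv : ∀ k, Convex ℝ (X k))
    (hhcv : ∀ k, ConvexOn ℝ Set.univ (h k))
    (hhlsc : ∀ k, LowerSemicontinuous (h k))
    (x : ℕ → Fin K → Fin N → ℝ) (hx0 : ∀ k, x 0 k ∈ X k)
    (hstep : ∀ r : ℕ, BCDStep A b h X (x r) (x (r + 1)))
    (xstar : Fin K → Fin N → ℝ) (hxstarX : ∀ k, xstar k ∈ X k)
    (hxstar : ∀ y : Fin K → Fin N → ℝ, (∀ k, y k ∈ X k) → fq A b h xstar ≤ fq A b h y)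
    (R0 : ℝ)
    (hR0 : ∀ z : Fin K → Fin N → ℝ, (∀ k, z k ∈ X k) → fq A b h z ≤ fq A b h (x 0) →
      ∀ y : Fin K → Fin N → ℝ, (∀ k, y k ∈ X k) →
        (∀ z' : Fin K → Fin N → ℝ, (∀ k, z' k ∈ X k) → fq A b h y ≤ fq A b h z') →
        Real.sqrt (∑ k, sqnorm (z k - y k)) ≤ R0)
    (r : ℕ) :
    fq A b h (x (r + 1)) - fq A b h xstar ≤
      3 * max (fq A b h (x 0) - fq A b h xstar)
          (2 * R0 ^ 2 * (1 / minOf hK γ ^ 2) * Real.log (2 * (N : ℝ) * (K : ℝ)) ^ 2 *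
            (lamMaxBlock A ^ 2 + maxOf hK (fun k => lamMaxQ (A k)) ^ 2)) /
        (r + 1) := by
  have hfeas : ∀ r k, x r k ∈ X k := by
    intro r
    cases r with
    | zero => exact hx0
    | succ n => exact fun k => (hstep n k).1
  have hmono : ∀ r, fq A b h (x (r + 1)) ≤ fq A b h (x r) := by
    intro r
    have h1 := aux_descent A b (x r) (x (r + 1)) h X hXcv hhcv (hstep r) (hfeas r)
    have h2 : 0 ≤ ∑ k, sqnorm (auxU A (x r) (x (r + 1)) k) :=
      Finset.sum_nonneg fun k _ => aux_sq_nonneg _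
    linarith
  have hle0 : ∀ r, fq A b h (x r) ≤ fq A b h (x 0) := by
    intro r
    induction r with
    | zero => exact le_rfl
    | succ n ih => exact (hmono n).trans ih
  have hD : ∀ r, ∑ k, sqnorm (x r k - xstar k) ≤ R0 ^ 2 := by
    intro r
    have h1 := hR0 (x r) (hfeas r) (hle0 r) xstar hxstarX hxstar
    have h2 : 0 ≤ ∑ k, sqnorm (x r k - xstar k) := Finset.sum_nonneg fun k _ => aux_sq_nonneg _
    rw [← Real.sq_sqrt h2]
    exact pow_le_pow_left₀ (Real.sqrt_nonneg _) h1 2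
  have hg : 0 < minOf hK γ := by
    unfold minOf
    rw [Finset.lt_inf'_iff]
    exact fun k _ => hγ k
  have hgle : ∀ k, minOf hK γ ≤ γ k := fun k => Finset.inf'_le _ (Finset.mem_univ k)
  have hKL : K * minOf hK γ ^ 2 ≤ lamMaxBlock A :=
    aux_L hM A _ (by positivity) hK
      (fun k => (pow_le_pow_left₀ hg.le (hgle k) 2).trans (hrank k))
  set g := minOf hK γ
  set L := lamMaxBlock A
  have hL : 0 ≤ L := le_trans (by positivity) hKL
  set C := 2 * R0 ^ 2 * (1 / g ^ 2) * Real.log (2 * (N : ℝ) * (K : ℝ)) ^ 2 *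
            (L ^ 2 + maxOf hK (fun k => lamMaxQ (A k)) ^ 2) with hC
  have hlog : 1 ≤ Real.log (2 * (N : ℝ) * (K : ℝ)) ^ 2 := by
    have h3 : (3 : ℝ) ≤ (N : ℝ) * K := by exact_mod_cast hNK
    have h1 : 1 ≤ Real.log (2 * (N : ℝ) * (K : ℝ)) := by
      rw [Real.le_log_iff_exp_le (by nlinarith)]
      have := Real.exp_one_lt_d9
      nlinarith
    exact one_le_pow₀ h1
  have hCC : 2 * (K * (L * R0 ^ 2)) ≤ C := by
    have h1 : (K : ℝ) ≤ L / g ^ 2 := by rw [le_div_iff₀ (by positivity)]; exact hKL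
    calc 2 * (K * (L * R0 ^ 2)) ≤ 2 * (L / g ^ 2 * (L * R0 ^ 2)) := by gcongr
      _ = 2 * R0 ^ 2 * (1 / g ^ 2) * 1 * (L ^ 2 + 0) := by ring
      _ ≤ C := by
        rw [hC]
        gcongr
        positivity
  have hm1 : C ≤ max (fq A b h (x 0) - fq A b h xstar) C := le_max_right _ _
  refine aux_seq (fun r => fq A b h (x r) - fq A b h xstar) _
    (fun r => sub_nonneg.2 (hxstar _ (hfeas r))) (fun r => sub_le_sub_right (hmono r) _)
    (le_max_left _ _) (fun r => ?_) r
  have h1 := aux_rec A b (x r) (x (r + 1)) h X hXcv hhcv (hstep r) (hfeas r) xstar hxstarX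
    (sub_nonneg.2 (hxstar _ (hfeas (r + 1)))) hL _ (hD (r + 1))
  refine h1.trans ?_
  rw [sub_sub_sub_cancel_right]
  exact mul_le_mul_of_nonneg_right (hCC.trans hm1) (sub_nonneg.2 (hmono r))
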